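/- arXiv:2005.04395 — 9 statements merged into one kernel-verified Lean document; each statement's English description precedes it below -/
import Mathlib

section
/- Let Λ = (Λ_n)_{n∈ℕ} be a g-frame for H with respect to K, with bounds A and B. Assume: (a) for every finitely supported family (g_n)_{n∈ℕ} in K, if ∑_n Λ_n* g_n = 0 then g_n = 0 for every n; and (b) the kernel of the synthesis operator is invariant under the right-shift, i.e. for every sequence (g_n)_{n∈ℕ} in K with ∑_n ‖g_n‖² < ∞, if the series ∑_n Λ_n* g_n converges to 0 then the series ∑_n Λ_{n+1}* g_n also converges to 0. Then there exists a bounded operator T : H → H with ‖T‖ ≤ √(B/A) such that Λ_n = Λ_0 ∘ Tⁿ for all n ∈ ℕ. -/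
/-- `Λ` is a g-frame for `H` with respect to `K`, with bounds `A` and `B`. -/
def IsGFrame {H K : Type*} [NormedAddCommGroup H] [InnerProductSpace ℂ H]
    [NormedAddCommGroup K] [InnerProductSpace ℂ K]
    (Λ : ℕ → H →L[ℂ] K) (A B : ℝ) : Prop :=
  0 < A ∧ A ≤ B ∧ ∀ f : H,
    Summable (fun n => ‖Λ n f‖ ^ 2) ∧
    A * ‖f‖ ^ 2 ≤ (∑' n, ‖Λ n f‖ ^ 2) ∧
    (∑' n, ‖Λ n f‖ ^ 2) ≤ B * ‖f‖ ^ 2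

theorem le_of_sq_le_sq_x {a b : ℝ} (h : a ^ 2 ≤ b ^ 2) (hb : 0 ≤ b) : a ≤ b :=
  abs_le_of_sq_le_sq' h hb |>.2

theorem stmt_0 {H K : Type*} [NormedAddCommGroup H] [InnerProductSpace ℂ H]
    [CompleteSpace H] [TopologicalSpace.SeparableSpace H]
    [NormedAddCommGroup K] [InnerProductSpace ℂ K]
    [CompleteSpace K] [TopologicalSpace.SeparableSpace K]
    (Λ : ℕ → H →L[ℂ] K) (A B : ℝ)
    (hframe : IsGFrame Λ A B)
    (hindep : ∀ (s : Finset ℕ) (g : ℕ → K),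
      (∑ n ∈ s, (Λ n).adjoint (g n)) = 0 → ∀ n ∈ s, g n = 0)
    (hshift : ∀ g : ℕ → K, Summable (fun n => ‖g n‖ ^ 2) →
      HasSum (fun n => (Λ n).adjoint (g n)) 0 →
      HasSum (fun n => (Λ (n + 1)).adjoint (g n)) 0) :
    ∃ T : H →L[ℂ] H, ‖T‖ ≤ Real.sqrt (B / A) ∧ ∀ n : ℕ, Λ n = (Λ 0).comp (T ^ n) := by
  obtain ⟨hA, hAB, hf⟩ := hframe
  have hB : 0 ≤ B := hA.le.trans hAB
  have hmem : ∀ f : H, Memℓp (fun n => Λ n f) 2 := fun f => by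
    refine memℓp_gen ?_
    simpa using (hf f).1
  have hmem' : ∀ f : H, Memℓp (fun n => Λ (n + 1) f) 2 := fun f => by
    refine memℓp_gen ?_
    simpa using (summable_nat_add_iff 1).2 (hf f).1
  have hnorm : ∀ h : lp (fun _ : ℕ => K) 2, ‖h‖ ^ 2 = ∑' n, ‖h n‖ ^ 2 := fun h => by
    have := lp.norm_rpow_eq_tsum (p := 2) (by simp) h
    simpa using this
  let θ₀ : H →ₗ[ℂ] lp (fun _ : ℕ => K) 2 :=
    { toFun := fun f => ⟨fun n => Λ n f, hmem f⟩
      map_add' := fun x y => by ext n; exact (Λ n).map_add x y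
      map_smul' := fun c x => by ext n; simp }
  have hθ₀ : ∀ f n, θ₀ f n = Λ n f := fun f n => rfl
  have hup : ∀ f, ‖θ₀ f‖ ≤ √B * ‖f‖ := fun f => by
    refine le_of_sq_le_sq_x ?_ (by positivity)
    rw [hnorm, mul_pow, Real.sq_sqrt hB]
    exact (hf f).2.2
  have hlo : ∀ f, √A * ‖f‖ ≤ ‖θ₀ f‖ := fun f => by
    refine le_of_sq_le_sq_x ?_ (by positivity)
    rw [hnorm, mul_pow, Real.sq_sqrt hA.le]
    exact (hf f).2.1
  have hsA : 0 < √A := Real.sqrt_pos.2 hA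
  let θ : H →L[ℂ] lp (fun _ : ℕ => K) 2 := θ₀.mkContinuous (√B) hup
  have hθ : ∀ f n, θ f n = Λ n f := fun f n => rfl
  have hlo' : ∀ f, √A * ‖f‖ ≤ ‖θ f‖ := hlo
  have hanti : AntilipschitzWith (Real.toNNReal (√A)⁻¹) θ := by
    refine ContinuousLinearMap.antilipschitz_of_bound θ fun x => ?_
    rw [Real.coe_toNNReal _ (by positivity), inv_mul_eq_div, le_div_iff₀ hsA, mul_comm]
    exact hlo' x
  have hclosed : IsClosed (Set.range θ) := hanti.isClosed_range θ.uniformContinuous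
  have hinj : Function.Injective θ := hanti.injective
  have hadj : ∀ (n : ℕ) (x : K),
      θ.adjoint (lp.single 2 n x) = (Λ n).adjoint x := fun n x => by
    refine ext_inner_left ℂ fun f => ?_
    rw [ContinuousLinearMap.adjoint_inner_right, ContinuousLinearMap.adjoint_inner_right,
      lp.inner_single_right, hθ]
  have hex : ∀ f : H, ∃ f' : H, ∀ n, Λ n f' = Λ (n + 1) f := fun f => by
    let h : lp (fun _ : ℕ => K) 2 := ⟨fun n => Λ (n + 1) f, hmem' f⟩
    let R : Submodule ℂ (lp (fun _ : ℕ => K) 2) := LinearMap.range θ.toLinearMap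
    have hRc : IsClosed (R : Set (lp (fun _ : ℕ => K) 2)) := by
      have : (R : Set (lp (fun _ : ℕ => K) 2)) = Set.range θ := by ext z; rfl
      rw [this]; exact hclosed
    have : h ∈ R := by
      rw [← hRc.submodule_topologicalClosure_eq, ← Submodule.orthogonal_orthogonal_eq_closure,
        Submodule.mem_orthogonal']
      intro g hg
      have hg0 : θ.adjoint g = 0 := by
        refine ext_inner_left ℂ fun x => ?_
        rw [ContinuousLinearMap.adjoint_inner_right, inner_zero_right]
        exact (Submodule.mem_orthogonal _ _).1 hg _ ⟨x, rfl⟩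
      have hs : HasSum (fun n => (Λ n).adjoint (g n)) 0 := by
        have := (lp.hasSum_single (p := 2) (by simp) g).mapL θ.adjoint
        rw [hg0] at this
        simpa only [hadj] using this
      have hsum : Summable (fun n => ‖g n‖ ^ 2) := by
        simpa using (lp.memℓp g).summable (by simp)
      have h1 := (hshift (fun n => g n) hsum hs).mapL (innerSL ℂ f)
      have h2 := lp.hasSum_inner (𝕜 := ℂ) h g
      refine h2.unique ?_
      simpa [ContinuousLinearMap.adjoint_inner_right, h] using h1
    obtain ⟨f', hf'⟩ := this
    refine ⟨f', fun n => ?_⟩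
    have := congrArg (fun k : lp (fun _ : ℕ => K) 2 => k n) hf'
    exact this
  choose T₀ hT₀ using hex
  have huniq : ∀ x y : H, (∀ n, Λ n x = Λ n y) → x = y := fun x y hxy =>
    hinj (by ext n; exact hxy n)
  let T₁ : H →ₗ[ℂ] H :=
    { toFun := T₀
      map_add' := fun x y => huniq _ _ fun n => by simp [hT₀]
      map_smul' := fun c x => huniq _ _ fun n => by simp [hT₀] }
  have hbd : ∀ f, ‖T₁ f‖ ≤ √(B / A) * ‖f‖ := fun f => by
    have h1 : A * ‖T₀ f‖ ^ 2 ≤ B * ‖f‖ ^ 2 := by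
      refine (hf (T₀ f)).2.1.trans (le_trans ?_ (hf f).2.2)
      simp only [hT₀]
      rw [(hf f).1.tsum_eq_zero_add]
      nlinarith [sq_nonneg ‖Λ 0 f‖]
    refine le_of_sq_le_sq_x ?_ (by positivity)
    rw [mul_pow, Real.sq_sqrt (by positivity), div_mul_eq_mul_div, le_div_iff₀ hA, mul_comm]
    exact h1
  let T : H →L[ℂ] H := T₁.mkContinuous _ hbd
  have hT : ∀ f n, Λ n (T f) = Λ (n + 1) f := hT₀
  refine ⟨T, LinearMap.mkContinuous_norm_le _ (by positivity) _, fun n => ?_⟩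
  have key : ∀ n m f, Λ m ((T ^ n) f) = Λ (m + n) f := by
    intro n
    induction n with
    | zero => intro m f; simp
    | succ k ih =>
      intro m f
      rw [pow_succ', mul_apply_eq_comp, hT, ih]
      congr 2
      omega
  ext f
  rw [ContinuousLinearMap.comp_apply, key, zero_add]
end

section
/- Let Λ = (Λ_n)_{n∈ℕ} be a g-frame for H with respect to K, with bounds A and B, which is represented by T ∈ B(H), and let S : H → H be a bounded invertible operator with bounded inverse. Then the family ΛS = (Λ_n ∘ S)_{n∈ℕ} is a g-frame (with bounds A·‖S⁻¹‖⁻² and B·‖S‖²), and ΛS is represented by the operator S⁻¹TS, i.e. Λ_n ∘ S = (Λ_0 ∘ S) ∘ (S⁻¹TS)ⁿ for all n ∈ ℕ. -/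
theorem stmt_2 {H K : Type*} [NormedAddCommGroup H] [InnerProductSpace ℂ H] [Nontrivial H]
    [CompleteSpace H] [TopologicalSpace.SeparableSpace H]
    [NormedAddCommGroup K] [InnerProductSpace ℂ K]
    [CompleteSpace K] [TopologicalSpace.SeparableSpace K]
    (Λ : ℕ → H →L[ℂ] K) (A B : ℝ) (hframe : IsGFrame Λ A B)
    (T : H →L[ℂ] H) (hrep : ∀ n : ℕ, Λ n = (Λ 0).comp (T ^ n))
    (S : H ≃L[ℂ] H) :
    IsGFrame (fun n => (Λ n).comp (S : H →L[ℂ] H))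
      (A * (‖(S.symm : H →L[ℂ] H)‖ ^ 2)⁻¹) (B * ‖(S : H →L[ℂ] H)‖ ^ 2) ∧
    ∀ n : ℕ, (Λ n).comp (S : H →L[ℂ] H) =
      ((Λ 0).comp (S : H →L[ℂ] H)).comp
        (((S.symm : H →L[ℂ] H).comp (T.comp (S : H →L[ℂ] H))) ^ n) := by
  obtain ⟨hA, hAB, hf⟩ := hframe
  have hpos : 0 < ‖(S.symm : H →L[ℂ] H)‖ := S.norm_symm_pos
  have key : ∀ f : H,
      A * (‖(S.symm : H →L[ℂ] H)‖ ^ 2)⁻¹ * ‖f‖ ^ 2 ≤ (∑' n, ‖Λ n (S f)‖ ^ 2) ∧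
      (∑' n, ‖Λ n (S f)‖ ^ 2) ≤ B * ‖(S : H →L[ℂ] H)‖ ^ 2 * ‖f‖ ^ 2 := by
    intro f
    obtain ⟨-, h1, h2⟩ := hf (S f)
    constructor
    · refine le_trans ?_ h1
      rw [mul_assoc]
      refine mul_le_mul_of_nonneg_left ?_ hA.le
      have h3 : ‖f‖ ≤ ‖(S.symm : H →L[ℂ] H)‖ * ‖S f‖ := by
        simpa using (S.symm : H →L[ℂ] H).le_opNorm (S f)
      rw [inv_mul_le_iff₀ (by positivity), ← mul_pow]
      gcongr
    · refine h2.trans ?_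
      rw [mul_assoc, ← mul_pow]
      have h3 : ‖S f‖ ≤ ‖(S : H →L[ℂ] H)‖ * ‖f‖ := (S : H →L[ℂ] H).le_opNorm f
      have hB : 0 ≤ B := hA.le.trans hAB
      gcongr
  refine ⟨⟨by positivity, ?_, fun f => ⟨(hf (S f)).1, key f⟩⟩, ?_⟩
  · obtain ⟨f, hf0⟩ := exists_ne (0 : H)
    have hp : 0 < ‖f‖ ^ 2 := by positivity
    exact le_of_mul_le_mul_right ((key f).1.trans (key f).2) hp
  · intro n
    have hpow : ∀ (n : ℕ) (x : H),
        S ((((S.symm : H →L[ℂ] H).comp (T.comp (S : H →L[ℂ] H))) ^ n) x) = (T ^ n) (S x) := by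
      intro n
      induction n with
      | zero => intro x; simp
      | succ k ih =>
        intro x
        rw [pow_succ, pow_succ, ContinuousLinearMap.mul_apply, ih]
        simp
    ext x
    have h := congrArg (fun L : H →L[ℂ] K => L (S x)) (hrep n)
    simp only [ContinuousLinearMap.comp_apply] at h
    simp only [ContinuousLinearMap.comp_apply, ContinuousLinearEquiv.coe_coe]
    rw [h, ← hpow n x]
end

section
/- Let Λ₁ ∈ B(H,K) and T ∈ B(H) be such that the family (Λ₁ ∘ Tⁿ)_{n∈ℕ} is a g-frame for H with lower bound A. If ‖Λ₁‖ < √A, then T is injective. (In fact, for every f ∈ H one has ∑_{n≥1} ‖Tⁿ f‖² ≥ (A/‖Λ₁‖² − 1)‖f‖².) -/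
theorem stmt_4 {H K : Type*} [NormedAddCommGroup H] [InnerProductSpace ℂ H]
    [CompleteSpace H] [TopologicalSpace.SeparableSpace H]
    [NormedAddCommGroup K] [InnerProductSpace ℂ K]
    [CompleteSpace K] [TopologicalSpace.SeparableSpace K]
    (Λ₁ : H →L[ℂ] K) (T : H →L[ℂ] H) (A B : ℝ)
    (hframe : IsGFrame (fun n => Λ₁.comp (T ^ n)) A B)
    (hΛ₁ : ‖Λ₁‖ < Real.sqrt A) :
    Function.Injective T ∧
    ∀ f : H, ENNReal.ofReal ((A / ‖Λ₁‖ ^ 2 - 1) * ‖f‖ ^ 2) ≤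
      ∑' n : ℕ, ENNReal.ofReal (‖(T ^ (n + 1)) f‖ ^ 2) := by
  obtain ⟨hA, -, hf⟩ := hframe
  have hsq : ‖Λ₁‖ ^ 2 < A := (Real.lt_sqrt (norm_nonneg _)).1 hΛ₁
  have hbd : ∀ g : H, ‖Λ₁ g‖ ^ 2 ≤ ‖Λ₁‖ ^ 2 * ‖g‖ ^ 2 := fun g => by
    rw [← mul_pow]
    exact pow_le_pow_left₀ (norm_nonneg _) (Λ₁.le_opNorm g) 2
  have key : ∀ f : H, Summable (fun n => ‖Λ₁ ((T ^ (n + 1)) f)‖ ^ 2) ∧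
      A * ‖f‖ ^ 2 ≤ ‖Λ₁‖ ^ 2 * ‖f‖ ^ 2 + ∑' n, ‖Λ₁ ((T ^ (n + 1)) f)‖ ^ 2 := by
    intro f
    obtain ⟨h1, h2, -⟩ := hf f
    simp only [ContinuousLinearMap.comp_apply] at h1 h2
    refine ⟨(summable_nat_add_iff 1).2 h1, ?_⟩
    rw [h1.tsum_eq_zero_add] at h2
    have h3 := hbd f
    have h4 : (T ^ 0) f = f := by simp
    rw [h4] at h2
    linarith
  constructor
  · rw [injective_iff_map_eq_zero]
    intro f hTf
    have h := (key f).2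
    have hz : ∀ n, (T ^ (n + 1)) f = 0 := fun n => by
      rw [pow_succ, mul_apply_eq_comp, hTf, map_zero]
    simp only [hz, map_zero, norm_zero] at h
    norm_num at h
    by_contra hne
    have hp : 0 < ‖f‖ ^ 2 := by positivity
    nlinarith
  · intro f
    by_cases htop : ∑' n : ℕ, ENNReal.ofReal (‖(T ^ (n + 1)) f‖ ^ 2) = ⊤
    · rw [htop]; exact le_top
    have hs : Summable (fun n : ℕ => ‖(T ^ (n + 1)) f‖ ^ 2) := by
      have := ENNReal.summable_toReal htop
      refine this.congr fun n => ?_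
      exact ENNReal.toReal_ofReal (by positivity)
    rw [← ENNReal.ofReal_tsum_of_nonneg (fun n => by positivity) hs]
    apply ENNReal.ofReal_le_ofReal
    have hS : 0 ≤ ∑' n : ℕ, ‖(T ^ (n + 1)) f‖ ^ 2 := tsum_nonneg fun n => by positivity
    obtain ⟨h1, h2⟩ := key f
    have h3 : ∑' n, ‖Λ₁ ((T ^ (n + 1)) f)‖ ^ 2 ≤
        ‖Λ₁‖ ^ 2 * ∑' n : ℕ, ‖(T ^ (n + 1)) f‖ ^ 2 := by
      rw [← tsum_mul_left]
      exact h1.tsum_le_tsum (fun n => hbd _) (hs.mul_left _)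
    rcases (sq_nonneg ‖Λ₁‖).eq_or_lt with h0 | h0
    · rw [← h0, div_zero]
      nlinarith [sq_nonneg ‖f‖]
    · have h5 : (A / ‖Λ₁‖ ^ 2 - 1) * ‖f‖ ^ 2 =
          (A * ‖f‖ ^ 2 - ‖Λ₁‖ ^ 2 * ‖f‖ ^ 2) / ‖Λ₁‖ ^ 2 := by
        have h6 := h0.ne'
        generalize ‖Λ₁‖ ^ 2 = c at h6
        field_simp
      rw [h5, div_le_iff₀ h0]
      linarith
end

section
/- Let Λ₁ ∈ B(H,K) and T ∈ B(H) be such that the family (Λ₁ ∘ Tⁿ)_{n∈ℕ} is a g-frame for H. Then for every f ∈ H, Tⁿ f → 0 in H as n → ∞. -/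
open Filter Topology

theorem stmt_6 {H K : Type*} [NormedAddCommGroup H] [InnerProductSpace ℂ H]
    [CompleteSpace H] [TopologicalSpace.SeparableSpace H]
    [NormedAddCommGroup K] [InnerProductSpace ℂ K]
    [CompleteSpace K] [TopologicalSpace.SeparableSpace K]
    (Λ₁ : H →L[ℂ] K) (T : H →L[ℂ] H) (A B : ℝ)
    (hframe : IsGFrame (fun n => Λ₁.comp (T ^ n)) A B) :
    ∀ f : H, Tendsto (fun n : ℕ => (T ^ n) f) atTop (𝓝 0) := by
  intro f
  obtain ⟨hA, -, h⟩ := hframe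
  have ht := tendsto_sum_nat_add (fun n => ‖Λ₁ ((T ^ n) f)‖ ^ 2)
  have hb : ∀ n : ℕ, ‖(T ^ n) f‖ ^ 2 ≤ A⁻¹ * ∑' m, ‖Λ₁ ((T ^ (m + n)) f)‖ ^ 2 := by
    intro n
    have h1 := (h ((T ^ n) f)).2.1
    have h2 : ∀ m, ((Λ₁.comp (T ^ m)) ((T ^ n) f)) = Λ₁ ((T ^ (m + n)) f) := by
      intro m
      rw [pow_add]
      rfl
    simp only [h2] at h1
    rw [inv_mul_eq_div, le_div_iff₀ hA, mul_comm]
    exact h1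
  have h3 : Tendsto (fun n : ℕ => ‖(T ^ n) f‖ ^ 2) atTop (𝓝 0) := by
    refine squeeze_zero (fun n => sq_nonneg _) hb ?_
    simpa using ht.const_mul A⁻¹
  rw [tendsto_zero_iff_norm_tendsto_zero]
  simpa using h3.sqrt
end

section
/- Let H be a nonzero complex separable Hilbert space and let T ∈ B(H) be unitary (T*T = TT* = Id_H). Then for every bounded operator Λ₁ ∈ B(H,K), the family (Λ₁ ∘ Tⁿ)_{n∈ℕ} is not a g-frame for H. -/
theorem stmt_7 {H K : Type*} [NormedAddCommGroup H] [InnerProductSpace ℂ H]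
    [CompleteSpace H] [TopologicalSpace.SeparableSpace H] [Nontrivial H]
    [NormedAddCommGroup K] [InnerProductSpace ℂ K]
    [CompleteSpace K] [TopologicalSpace.SeparableSpace K]
    (T : H →L[ℂ] H)
    (hunitary₁ : T.adjoint.comp T = ContinuousLinearMap.id ℂ H)
    (hunitary₂ : T.comp T.adjoint = ContinuousLinearMap.id ℂ H) :
    ∀ (Λ₁ : H →L[ℂ] K) (A B : ℝ), ¬ IsGFrame (fun n => Λ₁.comp (T ^ n)) A B := by
  rintro Λ₁ A B ⟨hA, -, h⟩
  have hiso : ∀ x : H, ‖T x‖ = ‖x‖ := by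
    intro x
    have h1 : inner ℂ (T x) (T x) = inner ℂ x x := by
      rw [← ContinuousLinearMap.adjoint_inner_right, ← ContinuousLinearMap.comp_apply,
        hunitary₁, ContinuousLinearMap.id_apply]
    rw [inner_self_eq_norm_sq_to_K, inner_self_eq_norm_sq_to_K] at h1
    have h2 : ‖T x‖ ^ 2 = ‖x‖ ^ 2 := by exact_mod_cast h1
    exact (pow_left_inj₀ (norm_nonneg _) (norm_nonneg _) two_ne_zero).1 h2
  have hpow : ∀ (m : ℕ) (x : H), ‖(T ^ m) x‖ = ‖x‖ := by
    intro m
    induction m with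
    | zero => intro x; simp
    | succ k ih => intro x; rw [pow_succ, ContinuousLinearMap.mul_apply, ih, hiso]
  obtain ⟨f, hf⟩ := exists_ne (0 : H)
  have hlim := tendsto_sum_nat_add (fun n => ‖(Λ₁.comp (T ^ n)) f‖ ^ 2)
  have hle : ∀ m : ℕ, A * ‖f‖ ^ 2 ≤ ∑' k, ‖(Λ₁.comp (T ^ (k + m))) f‖ ^ 2 := by
    intro m
    have h1 := (h ((T ^ m) f)).2.1
    rw [hpow] at h1
    refine h1.trans (le_of_eq ?_)
    refine tsum_congr fun k => ?_
    simp only [ContinuousLinearMap.comp_apply, pow_add, ContinuousLinearMap.mul_apply]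
  have h0 : A * ‖f‖ ^ 2 ≤ 0 := ge_of_tendsto' hlim hle
  have hpos : 0 < ‖f‖ := norm_pos_iff.2 hf
  have : 0 < A * ‖f‖ ^ 2 := by positivity
  linarith
end

section
/- Let H₁, H₂, K be complex separable Hilbert spaces, T ∈ B(H₁), S ∈ B(H₂), Λ ∈ B(H₁,K), Θ ∈ B(H₂,K), and let V : H₁ → H₂ be a bounded invertible operator with bounded inverse such that T = V⁻¹SV and Θ ∘ V = Λ. Then the family (Λ ∘ Tⁿ)_{n∈ℕ} is a g-frame for H₁ if and only if the family (Θ ∘ Sⁿ)_{n∈ℕ} is a g-frame for H₂. -/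
theorem IsGFrame.transfer_aux {H H' K : Type*}
    [NormedAddCommGroup H] [InnerProductSpace ℂ H]
    [NormedAddCommGroup H'] [InnerProductSpace ℂ H']
    [NormedAddCommGroup K] [InnerProductSpace ℂ K]
    (W : H ≃L[ℂ] H') (L : ℕ → H →L[ℂ] K) (M : ℕ → H' →L[ℂ] K)
    (h : ∀ n g, M n g = L n (W.symm g))
    (hL : ∃ A B : ℝ, IsGFrame L A B) : ∃ A B : ℝ, IsGFrame M A B := by
  obtain ⟨A, B, hA, hAB, hf⟩ := hL
  obtain ⟨c, hc, hcW⟩ : ∃ c : ℝ, 1 ≤ c ∧ ∀ f, ‖W f‖ ≤ c * ‖f‖ := by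
    refine ⟨‖(W : H →L[ℂ] H')‖ + 1, by linarith [norm_nonneg (W : H →L[ℂ] H')], fun f => ?_⟩
    have := (W : H →L[ℂ] H').le_opNorm f
    rw [ContinuousLinearEquiv.coe_coe] at this
    nlinarith [norm_nonneg f]
  obtain ⟨d, hd, hdW⟩ : ∃ d : ℝ, 1 ≤ d ∧ ∀ g, ‖W.symm g‖ ≤ d * ‖g‖ := by
    refine ⟨‖(W.symm : H' →L[ℂ] H)‖ + 1, by linarith [norm_nonneg (W.symm : H' →L[ℂ] H)],
      fun f => ?_⟩
    have := (W.symm : H' →L[ℂ] H).le_opNorm f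
    rw [ContinuousLinearEquiv.coe_coe] at this
    nlinarith [norm_nonneg f]
  have hc2 : 1 ≤ c ^ 2 := one_le_pow₀ hc
  have hd2 : 1 ≤ d ^ 2 := one_le_pow₀ hd
  refine ⟨A / c ^ 2, B * d ^ 2, by positivity, ?_, fun g => ?_⟩
  · have h1 : A / c ^ 2 ≤ A := div_le_self hA.le hc2
    nlinarith
  · obtain ⟨h1, h2, h3⟩ := hf (W.symm g)
    simp only [h]
    refine ⟨h1, le_trans ?_ h2, h3.trans ?_⟩
    · have h4 : ‖g‖ ^ 2 ≤ (c * ‖W.symm g‖) ^ 2 := by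
        have := hcW (W.symm g)
        rw [W.apply_symm_apply] at this
        gcongr
      rw [div_mul_eq_mul_div, div_le_iff₀ (by positivity)]
      nlinarith
    · have h4 : ‖W.symm g‖ ^ 2 ≤ (d * ‖g‖) ^ 2 := by
        have := hdW g
        gcongr
      nlinarith

theorem stmt_10 {H₁ H₂ K : Type*}
    [NormedAddCommGroup H₁] [InnerProductSpace ℂ H₁]
    [CompleteSpace H₁] [TopologicalSpace.SeparableSpace H₁]
    [NormedAddCommGroup H₂] [InnerProductSpace ℂ H₂]
    [CompleteSpace H₂] [TopologicalSpace.SeparableSpace H₂]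
    [NormedAddCommGroup K] [InnerProductSpace ℂ K]
    [CompleteSpace K] [TopologicalSpace.SeparableSpace K]
    (T : H₁ →L[ℂ] H₁) (S : H₂ →L[ℂ] H₂)
    (Λ : H₁ →L[ℂ] K) (Θ : H₂ →L[ℂ] K)
    (V : H₁ ≃L[ℂ] H₂)
    (hT : T = ((V.symm : H₂ →L[ℂ] H₁).comp S).comp (V : H₁ →L[ℂ] H₂))
    (hΘV : Θ.comp (V : H₁ →L[ℂ] H₂) = Λ) :
    (∃ A B : ℝ, IsGFrame (fun n => Λ.comp (T ^ n)) A B) ↔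
    (∃ A B : ℝ, IsGFrame (fun n => Θ.comp (S ^ n)) A B) := by
  have key : ∀ n f, (Λ.comp (T ^ n)) f = (Θ.comp (S ^ n)) (V f) := by
    have hVT : ∀ f, V (T f) = S (V f) := fun f => by simp [hT]
    have hpow : ∀ n f, V ((T ^ n) f) = (S ^ n) (V f) := by
      intro n
      induction n with
      | zero => intro f; simp
      | succ k ih =>
        intro f
        rw [pow_succ, pow_succ, ContinuousLinearMap.mul_apply, ContinuousLinearMap.mul_apply,
          ih, hVT]
    intro n f
    rw [ContinuousLinearMap.comp_apply, ContinuousLinearMap.comp_apply, ← hpow, ← hΘV]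
    rfl
  constructor
  · exact IsGFrame.transfer_aux V _ _ fun n g => by
      rw [key, V.apply_symm_apply]
  · exact IsGFrame.transfer_aux V.symm _ _ fun n g => by
      rw [key, V.symm_symm]
end

section
/- Let H be a nonzero complex separable Hilbert space, let Λ = (Λ_n)_{n∈ℕ} be a g-frame for H with respect to K having lower bound A, and let S_Λ be its frame operator. If there exists Θ ∈ B(H,K) such that the family (Θ ∘ S_Λⁿ)_{n∈ℕ} is a g-frame for H, then A < 1. -/
theorem stmt_11 {H K : Type*} [NormedAddCommGroup H] [InnerProductSpace ℂ H]
    [CompleteSpace H] [TopologicalSpace.SeparableSpace H] [Nontrivial H]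
    [NormedAddCommGroup K] [InnerProductSpace ℂ K]
    [CompleteSpace K] [TopologicalSpace.SeparableSpace K]
    (Λ : ℕ → H →L[ℂ] K) (A B : ℝ) (hframe : IsGFrame Λ A B)
    -- `S` is the frame operator of `Λ`
    (S : H →L[ℂ] H)
    (hS : ∀ f : H, HasSum (fun n => (Λ n).adjoint (Λ n f)) (S f))
    (hrep : ∃ (Θ : H →L[ℂ] K) (A' B' : ℝ), IsGFrame (fun n => Θ.comp (S ^ n)) A' B') :
    A < 1 := by
  by_contra hA
  push Not at hA
  obtain ⟨f, hf⟩ := exists_ne (0 : H)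
  have hexp : ∀ f : H, ‖f‖ ≤ ‖S f‖ := by
    intro f
    have h1 : HasSum (fun n => (inner ℂ f ((Λ n).adjoint (Λ n f)) : ℂ)) (inner ℂ f (S f)) :=
      (hS f).mapL (innerSL ℂ f)
    have h2 : HasSum (fun n => ‖Λ n f‖ ^ 2) (RCLike.re (inner ℂ f (S f) : ℂ)) := by
      have h3 := h1.mapL (RCLike.reCLM (K := ℂ))
      refine h3.congr_fun ?_ 
      intro n
      simp only [ContinuousLinearMap.adjoint_inner_right, RCLike.reCLM_apply]
      exact (inner_self_eq_norm_sq (𝕜 := ℂ) _).symm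
    have h4 := (hframe.2.2 f).2.1
    rw [h2.tsum_eq] at h4
    have h5 : RCLike.re (inner ℂ f (S f) : ℂ) ≤ ‖f‖ * ‖S f‖ := re_inner_le_norm f (S f)
    by_contra hlt
    push Not at hlt
    have h6 : 0 < ‖f‖ := lt_of_le_of_lt (norm_nonneg _) hlt
    nlinarith [mul_lt_mul_of_pos_left hlt h6, mul_nonneg (sub_nonneg.2 hA) (sq_nonneg ‖f‖)]
  have hpow : ∀ n : ℕ, ‖f‖ ≤ ‖(S ^ n) f‖ := by
    intro n
    induction n with
    | zero => simp
    | succ k ih =>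
      rw [pow_succ']
      exact ih.trans (hexp _)
  obtain ⟨Θ, A', B', hA', -, h⟩ := hrep
  have ht := tendsto_sum_nat_add (fun n => ‖(Θ.comp (S ^ n)) f‖ ^ 2)
  have hge : ∀ m : ℕ, A' * ‖f‖ ^ 2 ≤ ∑' n, ‖(Θ.comp (S ^ (n + m))) f‖ ^ 2 := by
    intro m
    have h1 := (h ((S ^ m) f)).2.1
    have h2 : ∀ n, (Θ.comp (S ^ n)) ((S ^ m) f) = (Θ.comp (S ^ (n + m))) f := by
      intro n
      rw [pow_add]; rfl
    simp only [h2] at h1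
    refine le_trans ?_ h1
    have := hpow m
    gcongr
  have h0 := ge_of_tendsto' ht hge
  have : 0 < ‖f‖ := norm_pos_iff.2 hf
  have : 0 < A' * ‖f‖ ^ 2 := by positivity
  linarith
end

section
/- Let H be an infinite-dimensional complex separable Hilbert space and K a finite-dimensional Hilbert space. If Λ₁ ∈ B(H,K) and T ∈ B(H) are such that the family (Λ₁ ∘ Tⁿ)_{n∈ℕ} is a g-frame for H, then T is not a compact operator. -/
theorem stmt_12 {H K : Type*} [NormedAddCommGroup H] [InnerProductSpace ℂ H]
    [CompleteSpace H] [TopologicalSpace.SeparableSpace H]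
    [NormedAddCommGroup K] [InnerProductSpace ℂ K] [CompleteSpace K]
    (hH : ¬ FiniteDimensional ℂ H) [FiniteDimensional ℂ K]
    (Λ₁ : H →L[ℂ] K) (T : H →L[ℂ] H) (A B : ℝ)
    (hframe : IsGFrame (fun n => Λ₁.comp (T ^ n)) A B) :
    ¬ IsCompactOperator (⇑T) := by
  intro hT
  apply hH
  obtain ⟨hA, hAB, h⟩ := hframe
  have hB : 0 < B := lt_of_lt_of_le hA hAB
  have key : ∀ f : H, A * ‖f‖ ^ 2 ≤ ‖Λ₁ f‖ ^ 2 + B * ‖T f‖ ^ 2 := by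
    intro f
    obtain ⟨h1, h2, -⟩ := h f
    obtain ⟨-, -, h3⟩ := h (T f)
    rw [h1.tsum_eq_zero_add] at h2
    simp only [ContinuousLinearMap.comp_apply, pow_succ, ContinuousLinearMap.mul_apply,
      pow_zero, ContinuousLinearMap.one_apply, one_mul] at h2 h3
    linarith
  let F : H →L[ℂ] H × K := T.prod Λ₁
  have hF : ∀ f : H, ‖f‖ ≤ (Real.toNNReal (Real.sqrt ((1 + B) / A)) : ℝ) * ‖F f‖ := by
    intro f
    rw [Real.coe_toNNReal _ (Real.sqrt_nonneg _)]
    have h1 : ‖T f‖ ≤ ‖F f‖ := norm_fst_le (F f)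
    have h2 : ‖Λ₁ f‖ ≤ ‖F f‖ := norm_snd_le (F f)
    refine abs_le_of_sq_le_sq' ?_ (by positivity) |>.2
    rw [mul_pow, Real.sq_sqrt (by positivity), div_mul_eq_mul_div, le_div_iff₀ hA]
    have h3 : ‖T f‖ ^ 2 ≤ ‖F f‖ ^ 2 := by gcongr
    have h4 : ‖Λ₁ f‖ ^ 2 ≤ ‖F f‖ ^ 2 := by gcongr
    have := key f
    nlinarith
  have hanti := AddMonoidHomClass.antilipschitz_of_bound F hF
  have hemb := hanti.isClosedEmbedding F.uniformContinuous
  obtain ⟨C, hC, hTC⟩ := hT.image_closedBall_subset_compact (f := (T : H →ₗ[ℂ] H)) 1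
  have hD : IsCompact (Metric.closedBall (0 : K) ‖Λ₁‖) :=
    haveI := FiniteDimensional.proper ℂ K
    isCompact_closedBall _ _
  have hcomp := hemb.isCompact_preimage (hC.prod hD)
  refine FiniteDimensional.of_isCompact_closedBall ℂ one_pos
    (hcomp.of_isClosed_subset (Metric.isClosed_closedBall (x := (0 : H)) (ε := 1)) ?_)
  intro f hf
  refine ⟨hTC ⟨f, hf, rfl⟩, ?_⟩
  rw [mem_closedBall_zero_iff] at hf ⊢
  exact Λ₁.unit_le_opNorm f hf
end

section
/- Let Λ = (Λ_n)_{n∈ℕ} be a family of bounded operators from H to K satisfying the upper g-Riesz condition with bound B, i.e. ‖∑_n Λ_n* g_n‖² ≤ B ∑_n ‖g_n‖² for every finitely supported family (g_n) in K, and let Θ = (Θ_n)_{n∈ℕ} be a family of bounded operators from H to K with β := ∑_{n∈ℕ} ‖Λ_n − Θ_n‖² < ∞. Then for every finitely supported family (g_n)_{n∈ℕ} in K, ‖∑_n Θ_n* g_n‖ ≤ (√β + √B)·(∑_n ‖g_n‖²)^{1/2}. -/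
theorem stmt_15 {H K : Type*} [NormedAddCommGroup H] [InnerProductSpace ℂ H]
    [CompleteSpace H] [TopologicalSpace.SeparableSpace H]
    [NormedAddCommGroup K] [InnerProductSpace ℂ K]
    [CompleteSpace K] [TopologicalSpace.SeparableSpace K]
    (Λ Θ : ℕ → H →L[ℂ] K) (B : ℝ) (hB : 0 < B)
    (hupper : ∀ (s : Finset ℕ) (g : ℕ → K),
      ‖∑ n ∈ s, (Λ n).adjoint (g n)‖ ^ 2 ≤ B * ∑ n ∈ s, ‖g n‖ ^ 2)
    (hβ : Summable (fun n => ‖Λ n - Θ n‖ ^ 2)) :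
    ∀ (s : Finset ℕ) (g : ℕ → K),
      ‖∑ n ∈ s, (Θ n).adjoint (g n)‖ ≤
        (Real.sqrt (∑' n, ‖Λ n - Θ n‖ ^ 2) + Real.sqrt B) *
          Real.sqrt (∑ n ∈ s, ‖g n‖ ^ 2) := by
  intro s g
  have h1 : ‖∑ n ∈ s, (Λ n).adjoint (g n)‖ ≤ Real.sqrt B * Real.sqrt (∑ n ∈ s, ‖g n‖ ^ 2) := by
    rw [← Real.sqrt_mul hB.le]
    exact Real.le_sqrt_of_sq_le (hupper s g)
  have h2 : ‖∑ n ∈ s, (Λ n - Θ n).adjoint (g n)‖ ≤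
      Real.sqrt (∑' n, ‖Λ n - Θ n‖ ^ 2) * Real.sqrt (∑ n ∈ s, ‖g n‖ ^ 2) := by
    calc ‖∑ n ∈ s, (Λ n - Θ n).adjoint (g n)‖
        ≤ ∑ n ∈ s, ‖Λ n - Θ n‖ * ‖g n‖ := by
          refine norm_sum_le_of_le s (fun n _ => ?_)
          have h := ((Λ n - Θ n).adjoint).le_opNorm (g n)
          rwa [LinearIsometryEquiv.norm_map] at h
      _ ≤ Real.sqrt (∑ n ∈ s, ‖Λ n - Θ n‖ ^ 2) * Real.sqrt (∑ n ∈ s, ‖g n‖ ^ 2) :=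
          Real.sum_mul_le_sqrt_mul_sqrt s _ _
      _ ≤ _ := by
          gcongr
          exact hβ.sum_le_tsum s (fun n _ => sq_nonneg _)
  have h3 : ∑ n ∈ s, (Θ n).adjoint (g n) =
      ∑ n ∈ s, (Λ n).adjoint (g n) - ∑ n ∈ s, (Λ n - Θ n).adjoint (g n) := by
    rw [← Finset.sum_sub_distrib]
    refine Finset.sum_congr rfl (fun n _ => ?_)
    simp [map_sub]
  rw [h3]
  refine (norm_sub_le _ _).trans ?_
  linarith
end
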